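/- arXiv:2409.06836 — 5 statements merged into one kernel-verified Lean document; each statement's English description precedes it below -/
import Mathlib

section
/- For every p ∈ [0,1] and every n ≥ 1, the finite sequence (Q(n,k))_{1≤k≤n} is unimodal: there exists a maximal index k_n ∈ {1,…,n} such that Q(n,k) ≥ Q(n,k−1) for all 1 ≤ k ≤ k_n and Q(n,k) ≤ Q(n,k−1) for all k_n < k ≤ n. Consequently, for each n the distribution of the position S_n of the elephant random walk (with first step +1) is unimodal on {2k − n : 1 ≤ k ≤ n}. -/
/-!
Write `a = 2p - 1`, `q = 1 - p` and `D n k = Q n k - Q n (k - 1)`. Since the two coefficients of the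
recurrence are affine in `k` with opposite slopes, the increments satisfy a recurrence of the same
shape (`erw_increment`):
`D (n+1) k = (n p - a k) * D n k + (q n + a (k - 2)) * D n (k - 1)`.
For `2 ≤ k ≤ n` both coefficients are nonnegative, so the increments of row `n + 1` change sign at
most once, from `+` to `-`, whenever those of row `n` do: if `m` is a mode of row `n`, then `m` or
`m + 1` is a mode of row `n + 1`.

The only obstruction is `k = n + 1`, where the first coefficient equals `q n - a` and may be
negative. If `q n ≤ a`, then row `n + 1` is nondecreasing (`erw_monotone`): here
`D n (n+1) = -Q n n ≤ 0`, so the product `(q n - a) * D n (n+1)` is nonnegative, and the other terms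
are nonnegative by induction. If `q n > a`, the coefficient is nonnegative and the sign argument
covers `k = n + 1` too.
-/

/-- The coefficient `n p - a k` (a step `-1` from `k` steps `+1` among `n`) is nonnegative. -/
lemma erw_coeff_stay_nonneg (p : ℝ) (hp : p ∈ Set.Icc (0 : ℝ) 1) {n k : ℕ}
    (hk : k ≤ n) : 0 ≤ (n : ℝ) * p - (2 * p - 1) * k := by
  have hk' : (k : ℝ) ≤ n := by exact_mod_cast hk
  have h0 : (0 : ℝ) ≤ k := k.cast_nonneg
  nlinarith [mul_nonneg hp.1 (sub_nonneg.2 hk'), mul_nonneg (sub_nonneg.2 hp.2) h0]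

/-- The coefficient `q n + a k` (a step `+1` from `k` steps `+1` among `n`) is nonnegative. -/
lemma erw_coeff_up_nonneg (p : ℝ) (hp : p ∈ Set.Icc (0 : ℝ) 1) {n k : ℕ}
    (hk : k ≤ n) : 0 ≤ (1 - p) * n + (2 * p - 1) * (k : ℝ) := by
  have hk' : (k : ℝ) ≤ n := by exact_mod_cast hk
  have h0 : (0 : ℝ) ≤ k := k.cast_nonneg
  nlinarith [mul_nonneg (sub_nonneg.2 hp.2) (sub_nonneg.2 hk'), mul_nonneg hp.1 h0]

lemma erw_nonneg (p : ℝ) (hp : p ∈ Set.Icc (0 : ℝ) 1) (Q : ℕ → ℕ → ℝ)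
    (hQ11 : Q 1 1 = 1)
    (hQzero : ∀ n : ℕ, 1 ≤ n → Q n 0 = 0)
    (hQtop : ∀ n : ℕ, 1 ≤ n → Q n (n + 1) = 0)
    (hQrec : ∀ n : ℕ, 1 ≤ n → ∀ k : ℕ, 1 ≤ k → k ≤ n + 1 →
      Q (n + 1) k = ((n : ℝ) * p - (2 * p - 1) * k) * Q n k
        + ((1 - p) * n + (2 * p - 1) * ((k : ℝ) - 1)) * Q n (k - 1))
    (n : ℕ) (hn : 1 ≤ n) : ∀ k ≤ n + 1, 0 ≤ Q n k := by
  induction n, hn using Nat.le_induction with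
  | base =>
    intro k hk
    interval_cases k
    · exact (hQzero 1 le_rfl).ge
    · rw [hQ11]; norm_num
    · exact (hQtop 1 le_rfl).ge
  | succ n hn ih =>
    intro k hk
    rcases Nat.lt_or_ge (n + 1) k with h | h
    · obtain rfl : k = n + 1 + 1 := by omega
      exact (hQtop (n + 1) (by omega)).ge
    rcases k with _ | j
    · exact (hQzero (n + 1) (by omega)).ge
    rw [hQrec n hn (j + 1) (by omega) h, Nat.add_sub_cancel]
    have hup : 0 ≤ ((1 - p) * n + (2 * p - 1) * (((j + 1 : ℕ) : ℝ) - 1)) * Q n j := by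
      have := erw_coeff_up_nonneg p hp (n := n) (k := j) (by omega)
      push_cast
      rw [add_sub_cancel_right]
      exact mul_nonneg this (ih j (by omega))
    refine add_nonneg ?_ hup
    rcases Nat.lt_or_ge n (j + 1) with h' | h'
    · obtain rfl : j = n := by omega
      simp [hQtop j hn]
    · exact mul_nonneg (erw_coeff_stay_nonneg p hp h') (ih _ (by omega))

/-- The recurrence for the increments of a row, at the index `k = j + 2`. -/
lemma erw_increment (p : ℝ) (Q : ℕ → ℕ → ℝ)
    (hQrec : ∀ n : ℕ, 1 ≤ n → ∀ k : ℕ, 1 ≤ k → k ≤ n + 1 →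
      Q (n + 1) k = ((n : ℝ) * p - (2 * p - 1) * k) * Q n k
        + ((1 - p) * n + (2 * p - 1) * ((k : ℝ) - 1)) * Q n (k - 1))
    (n : ℕ) (hn : 1 ≤ n) (j : ℕ) (hj : j + 1 ≤ n) :
    Q (n + 1) (j + 2) - Q (n + 1) (j + 1)
      = ((n : ℝ) * p - (2 * p - 1) * (j + 2 : ℕ)) * (Q n (j + 2) - Q n (j + 1))
        + ((1 - p) * n + (2 * p - 1) * (j : ℝ)) * (Q n (j + 1) - Q n j) := by
  rw [hQrec n hn (j + 2) (by omega) (by omega), hQrec n hn (j + 1) (by omega) (by omega),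
    show j + 2 - 1 = j + 1 by omega, Nat.add_sub_cancel]
  push_cast
  ring

/-- As long as `q (n - 1) ≤ a`, the whole row `n` is nondecreasing up to its last entry. -/
lemma erw_monotone (p : ℝ) (hp : p ∈ Set.Icc (0 : ℝ) 1) (Q : ℕ → ℕ → ℝ)
    (hQ11 : Q 1 1 = 1)
    (hQzero : ∀ n : ℕ, 1 ≤ n → Q n 0 = 0)
    (hQtop : ∀ n : ℕ, 1 ≤ n → Q n (n + 1) = 0)
    (hQrec : ∀ n : ℕ, 1 ≤ n → ∀ k : ℕ, 1 ≤ k → k ≤ n + 1 →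
      Q (n + 1) k = ((n : ℝ) * p - (2 * p - 1) * k) * Q n k
        + ((1 - p) * n + (2 * p - 1) * ((k : ℝ) - 1)) * Q n (k - 1))
    (n : ℕ) (hn : 1 ≤ n) :
    (1 - p) * ((n : ℝ) - 1) ≤ 2 * p - 1 → ∀ j : ℕ, j + 1 ≤ n → Q n j ≤ Q n (j + 1) := by
  induction n, hn using Nat.le_induction with
  | base =>
    intro _ j hj
    obtain rfl : j = 0 := by omega
    rw [hQzero 1 le_rfl, zero_add, hQ11]
    norm_num
  | succ n hn ih =>
    intro hq j hj
    have hnn := erw_nonneg p hp Q hQ11 hQzero hQtop hQrec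
    have hq' : (1 - p) * (n : ℝ) ≤ 2 * p - 1 := by simpa using hq
    have ih' := ih (by nlinarith [hp.2])
    rcases j with _ | j
    · rw [hQzero (n + 1) (by omega)]
      exact hnn (n + 1) (by omega) _ (by omega)
    rw [← sub_nonneg, erw_increment p Q hQrec n hn j (by omega)]
    refine add_nonneg ?_ (mul_nonneg (erw_coeff_up_nonneg p hp (by omega))
      (sub_nonneg.2 (ih' j (by omega))))
    rcases Nat.lt_or_ge n (j + 2) with h | h
    -- At the last index both factors are nonpositive.
    · obtain rfl : n = j + 1 := by omega
      rw [hQtop (j + 1) hn]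
      refine mul_nonneg_of_nonpos_of_nonpos ?_ ?_
      · push_cast at hq' ⊢
        nlinarith
      · linarith [hnn (j + 1) hn (j + 1) (by omega)]
    · exact mul_nonneg (erw_coeff_stay_nonneg p hp h) (sub_nonneg.2 (ih' (j + 1) (by omega)))

/-- Unimodality of the triangular array `Q` associated with the elephant
random walk with memory parameter `p` and first step `+1`. -/
theorem erw_Q_unimodal (p : ℝ) (hp : p ∈ Set.Icc (0 : ℝ) 1)
    (Q : ℕ → ℕ → ℝ)
    (hQ11 : Q 1 1 = 1)
    (hQzero : ∀ n : ℕ, 1 ≤ n → Q n 0 = 0)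
    (hQtop : ∀ n : ℕ, 1 ≤ n → Q n (n + 1) = 0)
    (hQrec : ∀ n : ℕ, 1 ≤ n → ∀ k : ℕ, 1 ≤ k → k ≤ n + 1 →
      Q (n + 1) k = ((n : ℝ) * p - (2 * p - 1) * k) * Q n k
        + ((1 - p) * n + (2 * p - 1) * ((k : ℝ) - 1)) * Q n (k - 1))
    (n : ℕ) (hn : 1 ≤ n) :
    ∃ kn : ℕ, 1 ≤ kn ∧ kn ≤ n ∧
      (∀ k : ℕ, 1 ≤ k → k ≤ kn → Q n (k - 1) ≤ Q n k) ∧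
      (∀ k : ℕ, kn < k → k ≤ n → Q n k ≤ Q n (k - 1)) := by
  have hnn := erw_nonneg p hp Q hQ11 hQzero hQtop hQrec
  induction n, hn using Nat.le_induction with
  | base =>
    refine ⟨1, le_rfl, le_rfl, fun k h1 h2 => ?_, fun k h1 h2 => by omega⟩
    obtain rfl : k = 1 := by omega
    rw [Nat.sub_self, hQzero 1 le_rfl]
    exact hnn 1 le_rfl 1 (by omega)
  | succ n hn ih =>
    rcases le_or_gt ((1 - p) * (n : ℝ)) (2 * p - 1) with hq | hq
    · refine ⟨n + 1, by omega, le_rfl, fun k h1 h2 => ?_, fun k h1 h2 => by omega⟩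
      obtain ⟨j, rfl⟩ : ∃ j, k = j + 1 := ⟨k - 1, by omega⟩
      exact erw_monotone p hp Q hQ11 hQzero hQtop hQrec (n + 1) (by omega)
        (by simpa using hq) j h2
    · obtain ⟨m, hm1, hmn, hup, hdown⟩ := ih
      have hstep := erw_increment p Q hQrec n hn
      have hinc : ∀ k : ℕ, 1 ≤ k → k ≤ m → Q (n + 1) (k - 1) ≤ Q (n + 1) k := by
        intro k h1 h2
        rcases Nat.lt_or_ge k 2 with h | h
        · obtain rfl : k = 1 := by omega
          rw [Nat.sub_self, hQzero (n + 1) (by omega)]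
          exact hnn (n + 1) (by omega) 1 (by omega)
        obtain ⟨j, rfl⟩ : ∃ j, k = j + 2 := ⟨k - 2, by omega⟩
        rw [← sub_nonneg]
        refine (hstep j (by omega)).ge.trans' (add_nonneg ?_ ?_)
        · exact mul_nonneg (erw_coeff_stay_nonneg p hp (by omega))
            (sub_nonneg.2 (hup (j + 2) h1 h2))
        · exact mul_nonneg (erw_coeff_up_nonneg p hp (by omega))
            (sub_nonneg.2 (hup (j + 1) (by omega) (by omega)))
      have hdec : ∀ k : ℕ, m + 1 < k → k ≤ n + 1 → Q (n + 1) k ≤ Q (n + 1) (k - 1) := by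
        intro k h1 h2
        obtain ⟨j, rfl⟩ : ∃ j, k = j + 2 := ⟨k - 2, by omega⟩
        rw [← sub_nonpos]
        refine (hstep j (by omega)).le.trans (add_nonpos ?_ ?_)
        · rcases Nat.lt_or_ge n (j + 2) with h | h
          -- The last index, where the coefficient is `q n - a`, positive in this case.
          · obtain rfl : n = j + 1 := by omega
            rw [hQtop (j + 1) hn]
            refine mul_nonpos_of_nonneg_of_nonpos ?_ ?_
            · push_cast at hq ⊢
              nlinarith
            · linarith [hnn (j + 1) hn (j + 1) (by omega)]
          · exact mul_nonpos_of_nonneg_of_nonpos (erw_coeff_stay_nonneg p hp h)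
              (sub_nonpos.2 (hdown (j + 2) (by omega) h))
        · exact mul_nonpos_of_nonneg_of_nonpos (erw_coeff_up_nonneg p hp (by omega))
            (sub_nonpos.2 (hdown (j + 1) (by omega) (by omega)))
      -- The sign of the increment at `m + 1` decides between the modes `m` and `m + 1`.
      rcases le_total (Q (n + 1) m) (Q (n + 1) (m + 1)) with h | h
      · refine ⟨m + 1, by omega, by omega, fun k h1 h2 => ?_, fun k h1 h2 => hdec k h1 h2⟩
        rcases Nat.lt_or_ge m k with h' | h'
        · obtain rfl : k = m + 1 := by omega
          exact h
        · exact hinc k h1 h'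
      · refine ⟨m, hm1, by omega, hinc, fun k h1 h2 => ?_⟩
        rcases Nat.lt_or_ge (m + 1) k with h' | h'
        · exact hdec k h' h2
        · obtain rfl : k = m + 1 := by omega
          exact h
end

section
/- For every a ∈ (1/2, 1), the function u ↦ (1 − (1+u²)^{−1/2}) u^{−1−1/a} is integrable on (0,∞) and (1/a) ∫_0^∞ (1 − 1/√(1+u²)) u^{−1−1/a} du = (1/2) B(1/2 + 1/(2a), 1 − 1/(2a)) = ρ_a^{1/a}, where B(·,·) is the Beta function. -/
/-!
Put `p = 1/a ∈ (1, 2)`. Integrating by parts with `p * u ^ (-1 - p) = (-u ^ (-p))'` turns the left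
side into `∫ u (1 + u²) ^ (-3/2) u ^ (-p) du` (`integral_main`), both boundary terms being zero.
The substitution `w = 1 / (1 + u²)`, a bijection from `(0, ∞)` to `(0, 1)`, identifies this with
half the Beta integral `∫₀¹ w ^ (p/2 - 1/2) (1 - w) ^ (-p/2) dw` (`integral_by_parts_term`).
The equality with `ρ_a ^ (1/a)` is the value `Γ(3/2) = √π / 2`.
-/

open MeasureTheory

/-- The exponential growth rate `ρ_a`. -/
noncomputable def rhoERW (a : ℝ) : ℝ :=
  ((1 / Real.sqrt Real.pi) * Real.Gamma (1/2 + 1/(2*a)) * Real.Gamma (1 - 1/(2*a))) ^ a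

open Set Filter Topology

/-- The Beta integral over the reals, written with the Gamma function. -/
lemma integral_Ioo_beta {α β : ℝ} (hα : 0 < α) (hβ : 0 < β) :
    ∫ x in Ioo (0 : ℝ) 1, x ^ (α - 1) * (1 - x) ^ (β - 1)
      = Real.Gamma α * Real.Gamma β / Real.Gamma (α + β) := by
  change _ = ProbabilityTheory.beta α β
  rw [ProbabilityTheory.beta_eq_betaIntegralReal α β hα hβ,
      Complex.betaIntegral, intervalIntegral.integral_of_le (by norm_num),
      ← integral_Ioc_eq_integral_Ioo, ← RCLike.re_to_complex, ← integral_re]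
  · refine setIntegral_congr_fun measurableSet_Ioc fun x ⟨hx1, hx₂⟩ ↦ ?_
    norm_cast
    rw [← Complex.ofReal_cpow, ← Complex.ofReal_cpow, RCLike.re_to_complex,
      Complex.re_mul_ofReal, Complex.ofReal_re]
    all_goals linarith
  convert! Complex.betaIntegral_convergent (u := α) (v := β) (by simpa) (by simpa)
  rw [intervalIntegrable_iff_integrableOn_Ioc_of_le (by simp), IntegrableOn]

lemma hasDerivAt_inv_one_add_sq (u : ℝ) :
    HasDerivAt (fun u : ℝ => (1 + u ^ 2)⁻¹) (-(2 * u) / (1 + u ^ 2) ^ 2) u := by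
  have h : HasDerivAt (fun u : ℝ => 1 + u ^ 2) (2 * u) u := by
    simpa using (hasDerivAt_pow 2 u).const_add 1
  exact h.inv (by positivity)

lemma injOn_inv_one_add_sq : InjOn (fun u : ℝ => (1 + u ^ 2)⁻¹) (Ioi 0) := by
  intro x hx y hy h
  have h2 : x ^ 2 = y ^ 2 := by simpa using h
  exact (pow_left_inj₀ (le_of_lt hx) (le_of_lt hy) two_ne_zero).1 h2

lemma image_inv_one_add_sq : (fun u : ℝ => (1 + u ^ 2)⁻¹) '' Ioi 0 = Ioo 0 1 := by
  ext w
  constructor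
  · rintro ⟨u, hu, rfl⟩
    have hu : 0 < u := hu
    exact ⟨by positivity, inv_lt_one_of_one_lt₀ (by nlinarith)⟩
  · rintro ⟨h0, h1⟩
    have h2 : 0 < w⁻¹ - 1 := sub_pos.2 ((one_lt_inv₀ h0).2 h1)
    refine ⟨√(w⁻¹ - 1), Real.sqrt_pos.2 h2, ?_⟩
    simp [Real.sq_sqrt h2.le]

/-- The Beta integrand with exponents `p/2 - 1/2`, `-p/2` becomes, under `w = 1 / (1 + u²)`,
twice the integrand left by the integration by parts. -/
lemma beta_integrand_subst (p : ℝ) {u : ℝ} (hu : 0 < u) :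
    |-(2 * u) / (1 + u ^ 2) ^ 2| •
      (((1 + u ^ 2)⁻¹) ^ ((1 / 2 + p / 2) - 1) * (1 - (1 + u ^ 2)⁻¹) ^ ((1 - p / 2) - 1))
      = 2 * (u / √(1 + u ^ 2) ^ 3 * u ^ (-p)) := by
  set s := √(1 + u ^ 2) with hs
  have hs0 : 0 < s := Real.sqrt_pos.2 (by positivity)
  have hs2 : 1 + u ^ 2 = s ^ (2 : ℝ) := by
    rw [Real.rpow_two, Real.sq_sqrt (by positivity)]
  have hu2 : 1 - (s ^ (2 : ℝ))⁻¹ = u ^ (2 : ℝ) / s ^ (2 : ℝ) := by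
    have : 0 < s ^ (2 : ℝ) := by positivity
    field_simp
    rw [← hs2, Real.rpow_two]; ring
  have e1 : ((s ^ (2 : ℝ))⁻¹) ^ ((1 / 2 + p / 2) - 1) = s ^ (1 - p) := by
    rw [← Real.rpow_neg hs0.le, ← Real.rpow_mul hs0.le]; congr 1; ring
  have e2 : (u ^ (2 : ℝ) / s ^ (2 : ℝ)) ^ ((1 - p / 2) - 1) = u ^ (-p) * s ^ p := by
    rw [Real.div_rpow (by positivity) (by positivity), ← Real.rpow_mul hs0.le,
      ← Real.rpow_mul hu.le, div_eq_mul_inv, ← Real.rpow_neg hs0.le]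
    congr 2 <;> ring
  have e3 : s ^ (1 - p) * s ^ p = s := by
    rw [← Real.rpow_add hs0]; simp
  rw [abs_div, abs_neg, abs_of_pos (by positivity : 0 < 2 * u), abs_of_pos (by positivity),
    hs2, hu2, e1, e2, smul_eq_mul]
  have : s ^ (1 - p) * (u ^ (-p) * s ^ p) = s * u ^ (-p) := by
    rw [mul_left_comm, e3, mul_comm]
  rw [this, Real.rpow_two]
  field_simp

lemma integral_by_parts_term {p : ℝ} (h1 : 1 < p) (h2 : p < 2) :
    IntegrableOn (fun u : ℝ => u / √(1 + u ^ 2) ^ 3 * u ^ (-p)) (Ioi 0) ∧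
    ∫ u in Ioi (0 : ℝ), u / √(1 + u ^ 2) ^ 3 * u ^ (-p)
      = (1 / 2) * (Real.Gamma (1 / 2 + p / 2) * Real.Gamma (1 - p / 2)
          / Real.Gamma ((1 / 2 + p / 2) + (1 - p / 2))) := by
  have hα : 0 < 1 / 2 + p / 2 := by linarith
  have hβ : 0 < 1 - p / 2 := by linarith
  have hb := integral_Ioo_beta hα hβ
  have hpos : 0 < Real.Gamma (1 / 2 + p / 2) * Real.Gamma (1 - p / 2)
      / Real.Gamma ((1 / 2 + p / 2) + (1 - p / 2)) := ProbabilityTheory.beta_pos hα hβ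
  rw [← image_inv_one_add_sq, integral_image_eq_integral_abs_deriv_smul measurableSet_Ioi
    (fun x _ => (hasDerivAt_inv_one_add_sq x).hasDerivWithinAt) injOn_inv_one_add_sq,
    setIntegral_congr_fun measurableSet_Ioi (fun u hu => beta_integrand_subst p hu),
    integral_const_mul] at hb
  have heq : ∫ u in Ioi (0 : ℝ), u / √(1 + u ^ 2) ^ 3 * u ^ (-p)
      = (1 / 2) * (Real.Gamma (1 / 2 + p / 2) * Real.Gamma (1 - p / 2)
          / Real.Gamma ((1 / 2 + p / 2) + (1 - p / 2))) := by linarith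
  -- a Bochner integral with a nonzero value comes from an integrable function
  refine ⟨Integrable.of_integral_ne_zero ?_, heq⟩
  rw [heq]
  positivity

lemma one_sub_inv_sqrt_nonneg (u : ℝ) : 0 ≤ 1 - 1 / √(1 + u ^ 2) := by
  have : 1 ≤ √(1 + u ^ 2) := Real.one_le_sqrt.2 (by nlinarith)
  rw [sub_nonneg]
  exact (div_le_one (by linarith)).2 this

lemma one_sub_inv_sqrt_le_one (u : ℝ) : 1 - 1 / √(1 + u ^ 2) ≤ 1 := by
  have : 0 ≤ 1 / √(1 + u ^ 2) := by positivity
  linarith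

lemma one_sub_inv_sqrt_le_sq (u : ℝ) : 1 - 1 / √(1 + u ^ 2) ≤ u ^ 2 := by
  have h1 : 1 ≤ √(1 + u ^ 2) := Real.one_le_sqrt.2 (by nlinarith)
  have h2 : √(1 + u ^ 2) ^ 2 = 1 + u ^ 2 := Real.sq_sqrt (by positivity)
  have h3 : 2 - √(1 + u ^ 2) ≤ 1 / √(1 + u ^ 2) := by
    rw [le_div_iff₀ (by linarith)]; nlinarith
  nlinarith

lemma hasDerivAt_one_sub_inv_sqrt (u : ℝ) :
    HasDerivAt (fun u : ℝ => 1 - 1 / √(1 + u ^ 2)) (u / √(1 + u ^ 2) ^ 3) u := by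
  have h : HasDerivAt (fun u : ℝ => 1 + u ^ 2) (2 * u) u := by
    simpa using (hasDerivAt_pow 2 u).const_add 1
  have hs : 0 < √(1 + u ^ 2) := Real.sqrt_pos.2 (by positivity)
  have h3 := ((h.sqrt (by positivity)).inv hs.ne').const_sub 1
  simp only [Pi.inv_apply, ← one_div] at h3
  refine h3.congr_deriv ?_
  field_simp

/-- Integrability by comparison with `u ^ (1 - p)` on `(0, 1]` and `u ^ (-1 - p)` on `(1, ∞)`. -/
lemma integrableOn_main {p : ℝ} (h1 : 1 < p) (h2 : p < 2) :
    IntegrableOn (fun u : ℝ => (1 - 1 / √(1 + u ^ 2)) * u ^ (-1 - p)) (Ioi 0) := by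
  have hm : Measurable (fun u : ℝ => (1 - 1 / √(1 + u ^ 2)) * u ^ (-1 - p)) := by fun_prop
  rw [← Ioc_union_Ioi_eq_Ioi zero_le_one]
  refine IntegrableOn.union ?_ ?_
  · have hi : IntegrableOn (fun u : ℝ => u ^ (1 - p)) (Ioc 0 1) :=
      (intervalIntegrable_iff_integrableOn_Ioc_of_le zero_le_one).1
        (intervalIntegral.intervalIntegrable_rpow' (by linarith))
    refine Integrable.mono' hi hm.aestronglyMeasurable
      (ae_restrict_of_forall_mem measurableSet_Ioc fun u hu => ?_)
    have hu0 : 0 < u := hu.1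
    rw [Real.norm_of_nonneg (mul_nonneg (one_sub_inv_sqrt_nonneg u) (by positivity))]
    calc _ ≤ u ^ 2 * u ^ (-1 - p) := by gcongr; exact one_sub_inv_sqrt_le_sq u
      _ = u ^ (1 - p) := by
        rw [← Real.rpow_two, ← Real.rpow_add hu0]; congr 1; ring
  · refine Integrable.mono' (integrableOn_Ioi_rpow_of_lt (by linarith : -1 - p < -1) one_pos)
      hm.aestronglyMeasurable (ae_restrict_of_forall_mem measurableSet_Ioi fun u hu => ?_)
    have hu0 : 0 < u := one_pos.trans hu
    rw [Real.norm_of_nonneg (mul_nonneg (one_sub_inv_sqrt_nonneg u) (by positivity))]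
    exact mul_le_of_le_one_left (by positivity) (one_sub_inv_sqrt_le_one u)

/-- Integration by parts against `(-u ^ (-p))' = p * u ^ (-1 - p)`. The boundary terms vanish since
`1 - 1 / √(1 + u²)` is at most `u²` and at most `1`. -/
lemma integral_main {p : ℝ} (h1 : 1 < p) (h2 : p < 2) :
    p * ∫ u in Ioi (0 : ℝ), (1 - 1 / √(1 + u ^ 2)) * u ^ (-1 - p)
      = ∫ u in Ioi (0 : ℝ), u / √(1 + u ^ 2) ^ 3 * u ^ (-p) := by
  have hv : ∀ x ∈ Ioi (0 : ℝ), HasDerivAt (fun u : ℝ => -u ^ (-p)) (p * x ^ (-1 - p)) x := by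
    intro x hx
    refine (Real.hasDerivAt_rpow_const (p := -p) (Or.inl (ne_of_gt hx))).neg.congr_deriv ?_
    rw [show -p - 1 = -1 - p by ring]; ring
  have key := integral_Ioi_mul_deriv_eq_deriv_mul (a' := (0 : ℝ)) (b' := 0)
    (fun x (_ : x ∈ Ioi (0 : ℝ)) => hasDerivAt_one_sub_inv_sqrt x) hv ?_ ?_ ?_ ?_
  · simp only [mul_neg, integral_neg, sub_zero, zero_sub, neg_neg] at key
    rw [← key, ← integral_const_mul]
    congr 1 with u
    ring
  · refine ((integrableOn_main h1 h2).const_mul p).congr (ae_of_all _ fun u => ?_)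
    simp only [Pi.mul_apply]; ring
  · refine (integral_by_parts_term h1 h2).1.neg.congr (ae_of_all _ fun u => ?_)
    simp only [Pi.mul_apply, Pi.neg_apply]; ring
  · have ht : Tendsto (fun u : ℝ => u ^ (2 - p)) (𝓝[>] 0) (𝓝 0) := by
      have := (Real.continuousAt_rpow_const 0 (2 - p) (Or.inr (by linarith))).tendsto
      rw [Real.zero_rpow (by linarith)] at this
      exact this.mono_left nhdsWithin_le_nhds
    refine squeeze_zero_norm' ?_ ht
    filter_upwards [self_mem_nhdsWithin] with u hu
    have hu0 : 0 < u := hu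
    rw [Pi.mul_apply, norm_mul, norm_neg, Real.norm_of_nonneg (one_sub_inv_sqrt_nonneg u),
      Real.norm_of_nonneg (by positivity)]
    calc _ ≤ u ^ 2 * u ^ (-p) := by gcongr; exact one_sub_inv_sqrt_le_sq u
      _ = u ^ (2 - p) := by
        rw [← Real.rpow_two, ← Real.rpow_add hu0]; congr 1
  · refine squeeze_zero_norm' ?_ (tendsto_rpow_neg_atTop (by linarith : 0 < p))
    filter_upwards [eventually_gt_atTop 0] with u hu
    rw [Pi.mul_apply, norm_mul, norm_neg, Real.norm_of_nonneg (one_sub_inv_sqrt_nonneg u),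
      Real.norm_of_nonneg (by positivity)]
    exact mul_le_of_le_one_left (by positivity) (one_sub_inv_sqrt_le_one u)



/-- the integral identity
`(1/a) ∫₀^∞ (1 − 1/√(1+u²)) u^{−1−1/a} du = B(1/2 + 1/(2a), 1 − 1/(2a))/2 = ρ_a^{1/a}`. -/
theorem erw_rho_integral_identity (a : ℝ) (ha : a ∈ Set.Ioo (1/2 : ℝ) 1) :
    IntegrableOn (fun u : ℝ => (1 - 1 / Real.sqrt (1 + u^2)) * u ^ (-1 - 1/a))
      (Set.Ioi 0) ∧
    (1/a) * ∫ u in Set.Ioi (0 : ℝ), (1 - 1 / Real.sqrt (1 + u^2)) * u ^ (-1 - 1/a)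
      = (1/2) * (Real.Gamma (1/2 + 1/(2*a)) * Real.Gamma (1 - 1/(2*a))
          / Real.Gamma ((1/2 + 1/(2*a)) + (1 - 1/(2*a)))) ∧
    (1/2) * (Real.Gamma (1/2 + 1/(2*a)) * Real.Gamma (1 - 1/(2*a))
        / Real.Gamma ((1/2 + 1/(2*a)) + (1 - 1/(2*a))))
      = rhoERW a ^ (1/a) := by
  obtain ⟨ha1, ha2⟩ := ha
  have ha0 : 0 < a := by linarith
  have h1 : 1 < 1 / a := (one_lt_div ha0).2 ha2
  have h2 : 1 / a < 2 := by rw [div_lt_iff₀ ha0]; linarith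
  have hp : 1 / (2 * a) = 1 / a / 2 := by field_simp
  rw [rhoERW, hp]
  refine ⟨integrableOn_main h1 h2, ?_, ?_⟩
  · rw [integral_main h1 h2, (integral_by_parts_term h1 h2).2]
  · have g1 : 0 < Real.Gamma (1 / 2 + 1 / a / 2) := Real.Gamma_pos_of_pos (by linarith)
    have g2 : 0 < Real.Gamma (1 - 1 / a / 2) := Real.Gamma_pos_of_pos (by linarith)
    have g3 : Real.Gamma ((1 / 2 + 1 / a / 2) + (1 - 1 / a / 2)) = 1 / 2 * √Real.pi := by
      rw [show (1 / 2 + 1 / a / 2) + (1 - 1 / a / 2) = 1 / 2 + 1 by ring,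
        Real.Gamma_add_one (by norm_num), Real.Gamma_one_half_eq]
    rw [← Real.rpow_mul (by positivity), mul_one_div_cancel ha0.ne', Real.rpow_one, g3]
    field_simp
end

section
/- For every real z > 1, the series ∑_{n≥0} (−1)^n (1/2)_n z^{−2n} / ((1 + a + 2an) n!) converges absolutely and F(z) = z^{−(1+1/a)} ∑_{n≥0} (−1)^n (1/2)_n z^{−2n} / ((1 + a + 2an) n!), where (x)_n = x(x+1)⋯(x+n−1) denotes the Pochhammer symbol with (x)_0 = 1. -/
/-!
For `u > 1`, the binomial series at `-u⁻²` gives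
`1 / (u^{1+1/a} √(1+u²)) = ∑ (-1)ⁿ (1/2)ₙ / n! · u^{-(2+1/a)-2n}` (`hasSum_integrand`).
Each power integrates over `(z, ∞)` to `z^{-(1+1/a)-2n} / (1+1/a+2n)`. Since `0 < (1/2)ₙ ≤ n!`, the
resulting series is dominated by the geometric series `∑ z^{-2n}`; this gives absolute convergence
and, as the terms have constant sign on `(z, ∞)`, also justifies integrating term by term.
-/

open MeasureTheory

/-- The function `F(x) = (1/a) ∫_x^∞ du / (u^{1+1/a} √(1+u²))`. -/
noncomputable def FERW (a : ℝ) (x : ℝ) : ℝ :=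
  (1/a) * ∫ u in Set.Ioi x, 1 / (u ^ (1 + 1/a) * Real.sqrt (1 + u^2))

lemma half_pochhammer_pos (n : ℕ) : 0 < (ascPochhammer ℝ n).eval (1/2) :=
  ascPochhammer_pos n _ (by norm_num)

lemma half_pochhammer_le_factorial (n : ℕ) :
    (ascPochhammer ℝ n).eval (1/2) ≤ (Nat.factorial n : ℝ) := by
  induction n with
  | zero => simp
  | succ k ih =>
    rw [ascPochhammer_succ_eval, Nat.factorial_succ, Nat.cast_mul, mul_comm]
    have := half_pochhammer_pos k
    push_cast
    exact mul_le_mul (by linarith) ih this.le (by positivity)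

lemma choose_eq_half_pochhammer (n : ℕ) :
    Ring.choose ((1/2 : ℝ) + n - 1) n = (ascPochhammer ℝ n).eval (1/2) / (Nat.factorial n : ℝ) := by
  have h := Ring.factorial_nsmul_multichoose_eq_ascPochhammer (1/2 : ℝ) n
  rw [Polynomial.ascPochhammer_smeval_eq_eval, nsmul_eq_mul] at h
  have h0 : (Nat.factorial n : ℝ) ≠ 0 := by positivity
  rw [eq_div_iff h0, ← h, Ring.choose, mul_comm]
  congr 2
  ring

/-- The binomial series of `(1 - x)^{-1/2}`. -/
lemma hasSum_inv_sqrt_one_sub {x : ℝ} (hx : |x| < 1) :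
    HasSum (fun n : ℕ => (ascPochhammer ℝ n).eval (1/2) / (Nat.factorial n : ℝ) * x ^ n)
      (1 / Real.sqrt (1 - x)) := by
  have h := (Real.one_div_one_sub_rpow_hasFPowerSeriesOnBall_zero (1/2)).hasSum
    (y := x) (by simpa [enorm_eq_nnnorm, ← NNReal.coe_lt_coe] using hx)
  rw [Real.sqrt_eq_rpow]
  simpa only [FormalMultilinearSeries.ofScalars_apply_eq, choose_eq_half_pochhammer, smul_eq_mul,
    zero_add] using h

lemma rpow_sub_two_mul_nat {u : ℝ} (hu : 0 < u) (b : ℝ) (n : ℕ) :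
    u ^ (b - 2 * n) = u ^ b * ((u ^ 2)⁻¹) ^ n := by
  rw [Real.rpow_sub hu, show (2 * n : ℝ) = ((2 * n : ℕ) : ℝ) by push_cast; ring,
    Real.rpow_natCast, pow_mul, inv_pow, div_eq_mul_inv]

lemma hasSum_integrand (a : ℝ) {u : ℝ} (hu : 1 < u) :
    HasSum (fun n : ℕ => (-1 : ℝ) ^ n * (ascPochhammer ℝ n).eval (1/2) / (Nat.factorial n : ℝ) *
        u ^ (-(2 + 1/a) - 2 * n))
      (1 / (u ^ (1 + 1/a) * Real.sqrt (1 + u^2))) := by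
  have hu0 : 0 < u := by linarith
  have hx : |(-(u ^ 2)⁻¹)| < 1 := by
    rw [abs_neg, abs_of_pos (by positivity)]
    exact inv_lt_one_of_one_lt₀ (by nlinarith)
  have hsqrt : Real.sqrt (1 + u ^ 2) = u * Real.sqrt (1 - -(u ^ 2)⁻¹) := by
    rw [show 1 + u ^ 2 = u ^ 2 * (1 - -(u ^ 2)⁻¹) by field_simp; ring,
      Real.sqrt_mul (by positivity), Real.sqrt_sq hu0.le]
  have hpow : u ^ (2 + 1/a) = u ^ (1 + 1/a) * u := by
    rw [show 2 + 1/a = (1 + 1/a) + 1 by ring, Real.rpow_add_one hu0.ne']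
  have hval : 1 / (u ^ (1 + 1/a) * Real.sqrt (1 + u^2)) =
      u ^ (-(2 + 1/a)) * (1 / Real.sqrt (1 - -(u ^ 2)⁻¹)) := by
    rw [hsqrt, Real.rpow_neg hu0.le, hpow, ← mul_assoc, one_div (_ * _), mul_inv, one_div (Real.sqrt _)]
  rw [hval]
  have h := (hasSum_inv_sqrt_one_sub hx).mul_left (u ^ (-(2 + 1/a)))
  refine (congrArg (HasSum · _) (funext fun n => ?_)).mpr h
  rw [rpow_sub_two_mul_nat hu0, neg_pow]
  ring

lemma summable_abs_terms {a : ℝ} (ha : 0 < a) {z : ℝ} (hz : 1 < z) :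
    Summable (fun n : ℕ =>
      |(-1 : ℝ) ^ n * (ascPochhammer ℝ n).eval (1/2) /
        (z ^ (2 * n) * ((1 + a + 2 * a * n) * (Nat.factorial n : ℝ)))|) := by
  have hz0 : 0 < z := by linarith
  refine Summable.of_nonneg_of_le (fun n => abs_nonneg _) (fun n => ?_)
    (summable_geometric_of_lt_one (r := (z ^ 2)⁻¹) (by positivity)
      (inv_lt_one_of_one_lt₀ (by nlinarith)))
  have hp := half_pochhammer_pos n
  have hf : (0 : ℝ) < Nat.factorial n := by positivity
  have hd : 1 ≤ 1 + a + 2 * a * n := by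
    have : 0 ≤ 2 * a * n := by positivity
    linarith
  rw [abs_div, abs_mul, abs_pow, abs_neg, abs_one, one_pow, one_mul, abs_of_pos hp,
    abs_of_pos (by positivity), inv_pow, ← pow_mul, div_le_iff₀ (by positivity),
    inv_mul_cancel_left₀ (by positivity)]
  nlinarith [half_pochhammer_le_factorial n]

/-- for `z > 1`, the series
`∑ (−1)ⁿ (1/2)ₙ z^{−2n} / ((1+a+2an) n!)` converges absolutely and
`F(z) = z^{−(1+1/a)} ∑ (−1)ⁿ (1/2)ₙ z^{−2n} / ((1+a+2an) n!)`. -/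
theorem erw_F_series_expansion (a : ℝ) (ha : a ∈ Set.Ioo (1/2 : ℝ) 1)
    (z : ℝ) (hz : 1 < z) :
    Summable (fun n : ℕ =>
      |(-1 : ℝ) ^ n * (ascPochhammer ℝ n).eval (1/2) /
        (z ^ (2 * n) * ((1 + a + 2 * a * n) * (Nat.factorial n : ℝ)))|) ∧
    FERW a z = z ^ (-(1 + 1/a)) *
      ∑' n : ℕ, (-1 : ℝ) ^ n * (ascPochhammer ℝ n).eval (1/2) /
        (z ^ (2 * n) * ((1 + a + 2 * a * n) * (Nat.factorial n : ℝ))) := by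
  have ha0 : 0 < a := by linarith [ha.1]
  have hz0 : 0 < z := by linarith
  have hsum := summable_abs_terms ha0 hz
  refine ⟨hsum, ?_⟩
  set c : ℕ → ℝ := fun n =>
    (-1 : ℝ) ^ n * (ascPochhammer ℝ n).eval (1/2) / (Nat.factorial n : ℝ) with hc
  set t : ℕ → ℝ := fun n => (-1 : ℝ) ^ n * (ascPochhammer ℝ n).eval (1/2) /
        (z ^ (2 * n) * ((1 + a + 2 * a * n) * (Nat.factorial n : ℝ))) with ht
  have hexp : ∀ n : ℕ, -(2 + 1/a) - 2 * (n : ℝ) < -1 := fun n => by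
    have : 0 < 1 / a := by positivity
    have : (0 : ℝ) ≤ n := by positivity
    linarith
  have hint : ∀ n : ℕ, ∫ u in Set.Ioi z, c n * u ^ (-(2 + 1/a) - 2 * (n : ℝ)) =
      a * z ^ (-(1 + 1/a)) * t n := fun n => by
    rw [integral_const_mul, integral_Ioi_rpow_of_lt (hexp n) hz0,
      show -(2 + 1/a) - 2 * (n : ℝ) + 1 = -(1 + 1/a) - 2 * n by ring, rpow_sub_two_mul_nat hz0,
      show -(1 + 1/a) - 2 * (n : ℝ) = -((1 + a + 2 * a * n) / a) by field_simp; ring]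
    have hd : 1 + a + 2 * a * n ≠ 0 := by positivity
    simp only [hc, ht, pow_mul, inv_pow]
    field_simp
  have hnorm : ∀ n : ℕ, ∫ u in Set.Ioi z, ‖c n * u ^ (-(2 + 1/a) - 2 * (n : ℝ))‖ =
      a * z ^ (-(1 + 1/a)) * |t n| := fun n => by
    -- The powers are positive on `(z, ∞)`, so the norm only affects the coefficient `c n`.
    have h1 : ∫ u in Set.Ioi z, ‖c n * u ^ (-(2 + 1/a) - 2 * (n : ℝ))‖ =
        ∫ u in Set.Ioi z, |c n| * u ^ (-(2 + 1/a) - 2 * (n : ℝ)) :=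
      setIntegral_congr_fun measurableSet_Ioi fun u hu => by
        have hu0 : 0 < u := hz0.trans hu
        simp only [norm_mul, Real.norm_eq_abs, abs_of_pos (Real.rpow_pos_of_pos hu0 _)]
    have hpos : 0 < a * z ^ (-(1 + 1/a)) := by positivity
    have hI : 0 ≤ ∫ u in Set.Ioi z, u ^ (-(2 + 1/a) - 2 * (n : ℝ)) :=
      setIntegral_nonneg measurableSet_Ioi fun u hu => Real.rpow_nonneg (hz0.trans hu).le _
    have h2 := hint n
    rw [integral_const_mul] at h2
    rw [h1, integral_const_mul, ← abs_of_nonneg hI, ← abs_mul, h2, abs_mul, abs_of_pos hpos]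
  have key := hasSum_integral_of_summable_integral_norm (μ := volume.restrict (Set.Ioi z))
    (F := fun (n : ℕ) (u : ℝ) => c n * u ^ (-(2 + 1/a) - 2 * (n : ℝ)))
    (fun n => (integrableOn_Ioi_rpow_of_lt (hexp n) hz0).const_mul _)
    (by simp only [hnorm]; exact hsum.mul_left _)
  have hF : ∫ u in Set.Ioi z, 1 / (u ^ (1 + 1/a) * Real.sqrt (1 + u^2)) =
      ∫ u in Set.Ioi z, ∑' n : ℕ, c n * u ^ (-(2 + 1/a) - 2 * (n : ℝ)) :=
    setIntegral_congr_fun measurableSet_Ioi fun u hu =>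
      (hasSum_integrand a (hz.trans hu)).tsum_eq.symm
  rw [FERW, hF, ← key.tsum_eq]
  simp only [hint]
  rw [tsum_mul_left]
  field_simp
end

section
/- As y → 0+, the inverse function F⁻¹ admits the expansion F⁻¹(y) = ((a+1) y)^{−a/(a+1)} · (1 − c₁ y^{2a/(a+1)} + o(y^{2a/(a+1)})), where c₁ = a (a+1)^{2a/(a+1)} / (2(3a+1)); in particular lim_{y→0+} (a+1)^{a/(a+1)} y^{a/(a+1)} F⁻¹(y) = 1. -/
open MeasureTheory Filter

/-- Taylor bounds for `(1+u⁻²)^{-1/2}`, multiplied by `u^{-(2+p)}`. In terms of `q = √(1+u⁻²) ≥ 1`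
they reduce to `(q-1)²(q+2) ≥ 0` and `(q-1)³(3q²+9q+8) ≥ 0`. -/
lemma erw_integrand_bounds (p u : ℝ) (hu : 0 < u) :
    u ^ (-(2 + p)) - 1 / 2 * u ^ (-(4 + p)) ≤ 1 / (u ^ (1 + p) * Real.sqrt (1 + u ^ 2)) ∧
    1 / (u ^ (1 + p) * Real.sqrt (1 + u ^ 2)) ≤
      u ^ (-(2 + p)) - 1 / 2 * u ^ (-(4 + p)) + 3 / 8 * u ^ (-(6 + p)) := by
  set q := Real.sqrt (1 + (u ^ 2)⁻¹) with hq
  have hv : 0 < (u ^ 2)⁻¹ := by positivity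
  have hq2 : q ^ 2 = 1 + (u ^ 2)⁻¹ := Real.sq_sqrt (by positivity)
  have hq1 : 1 ≤ q := by
    rw [hq]; exact Real.one_le_sqrt.mpr (by linarith)
  have hq0 : 0 < q := by linarith
  have hs : Real.sqrt (1 + u ^ 2) = u * q := by
    rw [Real.sqrt_eq_iff_mul_self_eq (by positivity) (by positivity)]
    have : u * q * (u * q) = u ^ 2 * q ^ 2 := by ring
    rw [this, hq2]; field_simp; ring
  have e2 : 1 / (u ^ (1 + p) * Real.sqrt (1 + u ^ 2)) = u ^ (-(2 + p)) * q⁻¹ := by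
    rw [hs, Real.rpow_neg hu.le, show (2 + p) = (1 + p) + 1 by ring, Real.rpow_add_one hu.ne']
    field_simp
  have e4 : u ^ (-(4 + p)) = u ^ (-(2 + p)) * (q ^ 2 - 1) := by
    rw [hq2, show -(4 + p) = -(2 + p) - (2 : ℕ) by push_cast; ring, Real.rpow_sub_natCast hu.ne']
    field_simp; ring
  have e6 : u ^ (-(6 + p)) = u ^ (-(2 + p)) * (q ^ 2 - 1) ^ 2 := by
    rw [hq2, show -(6 + p) = -(2 + p) - (4 : ℕ) by push_cast; ring, Real.rpow_sub_natCast hu.ne']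
    field_simp; ring
  have hw : 0 < u ^ (-(2 + p)) := Real.rpow_pos_of_pos hu _
  rw [e2, e4, e6]
  generalize u ^ (-(2 + p)) = w at hw
  constructor
  · have : 1 - 1 / 2 * (q ^ 2 - 1) ≤ q⁻¹ := by
      rw [← one_div, le_div_iff₀ hq0]
      nlinarith [mul_nonneg (sq_nonneg (q - 1)) (by linarith : 0 ≤ q + 2)]
    nlinarith [mul_le_mul_of_nonneg_left this hw.le]
  · have : q⁻¹ ≤ 1 - 1 / 2 * (q ^ 2 - 1) + 3 / 8 * (q ^ 2 - 1) ^ 2 := by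
      rw [inv_le_iff_one_le_mul₀ hq0]
      have := mul_nonneg (pow_nonneg (by linarith : 0 ≤ q - 1) 3)
        (by positivity : 0 ≤ 3 * q ^ 2 + 9 * q + 8)
      nlinarith
    nlinarith [mul_le_mul_of_nonneg_left this hw.le]

lemma erw_rpow_integrable (r x : ℝ) (hr : 1 < r) (hx : 0 < x) :
    IntegrableOn (fun u : ℝ => u ^ (-r)) (Set.Ioi x) :=
  integrableOn_Ioi_rpow_of_lt (by linarith) hx

lemma erw_rpow_integral (r x : ℝ) (hr : 1 < r) (hx : 0 < x) :
    ∫ u in Set.Ioi x, u ^ (-r) = x ^ (1 - r) / (r - 1) := by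
  rw [integral_Ioi_rpow_of_lt (by linarith) hx, show -r + 1 = 1 - r by ring, neg_div,
    ← div_neg]
  congr 1; ring

lemma erw_integrable (p x : ℝ) (hp : 0 < p) (hx : 0 < x) :
    IntegrableOn (fun u : ℝ => 1 / (u ^ (1 + p) * Real.sqrt (1 + u ^ 2))) (Set.Ioi x) := by
  refine Integrable.mono' (((erw_rpow_integrable (2 + p) x (by linarith) hx).sub
    ((erw_rpow_integrable (4 + p) x (by linarith) hx).const_mul (1 / 2))).add
    ((erw_rpow_integrable (6 + p) x (by linarith) hx).const_mul (3 / 8))) ?_ ?_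
  · exact Measurable.aestronglyMeasurable (by fun_prop)
  · filter_upwards [ae_restrict_mem measurableSet_Ioi] with u hu
    have hu0 : 0 < u := hx.trans hu
    rw [Real.norm_of_nonneg (by positivity)]
    exact (erw_integrand_bounds p u hu0).2

lemma erw_F_pos (a x : ℝ) (ha : 0 < a) (hx : 0 < x) : 0 < FERW a x := by
  refine mul_pos (by positivity) ?_
  rw [setIntegral_pos_iff_support_of_nonneg_ae _
    (erw_integrable (1 / a) x (by positivity) hx)]
  · refine lt_of_lt_of_le (b := volume (Set.Ioi x)) (by simp) (measure_mono fun u hu => ?_)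
    have hu0 : 0 < u := hx.trans hu
    refine ⟨?_, hu⟩
    rw [Function.mem_support]
    positivity
  · filter_upwards [ae_restrict_mem measurableSet_Ioi] with u hu
    have hu0 : 0 < u := hx.trans hu
    simp only [Pi.zero_apply]
    positivity

lemma erw_F_anti (a x x' : ℝ) (ha : 0 < a) (hx : 0 < x) (h : x ≤ x') :
    FERW a x' ≤ FERW a x := by
  refine mul_le_mul_of_nonneg_left ?_ (by positivity)
  refine setIntegral_mono_set (erw_integrable (1 / a) x (by positivity) hx) ?_
    (Set.Ioi_subset_Ioi h).eventuallyLE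
  filter_upwards [ae_restrict_mem measurableSet_Ioi] with u hu
  have hu0 : 0 < u := hx.trans hu
  simp only [Pi.zero_apply]
  positivity

/-- `F` normalised by its leading asymptotic behaviour at infinity, so that it tends to `1`. -/
noncomputable def erwG (a x : ℝ) : ℝ := (a + 1) * FERW a x * x ^ (1 + 1 / a)

lemma erwG_bounds (a x : ℝ) (ha : 0 < a) (hx : 0 < x) :
    1 - (a + 1) / (2 * (3 * a + 1)) * (x ^ 2)⁻¹ ≤ erwG a x ∧
    erwG a x ≤ 1 - (a + 1) / (2 * (3 * a + 1)) * (x ^ 2)⁻¹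
      + 3 * (a + 1) / (8 * (5 * a + 1)) * (x ^ 4)⁻¹ := by
  have hp : 0 < 1 / a := by positivity
  have i2 := erw_rpow_integrable (2 + 1 / a) x (by linarith) hx
  have i4 := (erw_rpow_integrable (4 + 1 / a) x (by linarith) hx).const_mul (1 / 2)
  have i6 := (erw_rpow_integrable (6 + 1 / a) x (by linarith) hx).const_mul (3 / 8)
  have iF := erw_integrable (1 / a) x hp hx
  have lo := setIntegral_mono_on (i2.sub i4) iF measurableSet_Ioi
    fun u hu => (erw_integrand_bounds (1 / a) u (hx.trans hu)).1
  have hi := setIntegral_mono_on iF ((i2.sub i4).add i6) measurableSet_Ioi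
    fun u hu => (erw_integrand_bounds (1 / a) u (hx.trans hu)).2
  have j24 := integral_sub i2 i4
  have j246 := integral_add (i2.sub i4) i6
  simp only [Pi.sub_apply, Pi.add_apply] at lo hi j24 j246
  rw [j24] at lo
  rw [j246, j24] at hi
  rw [integral_const_mul, erw_rpow_integral _ _ (by linarith) hx,
    erw_rpow_integral _ _ (by linarith) hx] at lo
  rw [integral_const_mul, integral_const_mul, erw_rpow_integral _ _ (by linarith) hx,
    erw_rpow_integral _ _ (by linarith) hx, erw_rpow_integral _ _ (by linarith) hx] at hi
  have hX : 0 < x ^ (1 + 1 / a) := Real.rpow_pos_of_pos hx _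
  have e2 : x ^ (1 - (2 + 1 / a)) = (x ^ (1 + 1 / a))⁻¹ := by
    rw [← Real.rpow_neg hx.le]; congr 1; ring
  have e4 : x ^ (1 - (4 + 1 / a)) = (x ^ (1 + 1 / a))⁻¹ * (x ^ 2)⁻¹ := by
    rw [← e2, show 1 - (4 + 1 / a) = 1 - (2 + 1 / a) - (2 : ℕ) by push_cast; ring,
      Real.rpow_sub_natCast hx.ne', div_eq_mul_inv]
  have e6 : x ^ (1 - (6 + 1 / a)) = (x ^ (1 + 1 / a))⁻¹ * (x ^ 4)⁻¹ := by
    rw [← e2, show 1 - (6 + 1 / a) = 1 - (2 + 1 / a) - (4 : ℕ) by push_cast; ring,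
      Real.rpow_sub_natCast hx.ne', div_eq_mul_inv]
  rw [e2, e4] at lo
  rw [e2, e4, e6] at hi
  have d2 : 2 + 1 / a - 1 = (a + 1) / a := by field_simp; ring
  have d4 : 4 + 1 / a - 1 = (3 * a + 1) / a := by field_simp; ring
  have d6 : 6 + 1 / a - 1 = (5 * a + 1) / a := by field_simp; ring
  rw [d2, d4] at lo
  rw [d2, d4, d6] at hi
  unfold erwG FERW
  generalize (∫ u in Set.Ioi x, 1 / (u ^ (1 + 1 / a) * Real.sqrt (1 + u ^ 2))) = I at lo hi ⊢
  generalize x ^ (1 + 1 / a) = X at lo hi hX ⊢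
  have hc : 0 ≤ (a + 1) * (1 / a) * X := by positivity
  have lo' := mul_le_mul_of_nonneg_left lo hc
  have hi' := mul_le_mul_of_nonneg_left hi hc
  constructor
  · calc _ = (a + 1) * (1 / a) * X * (X⁻¹ / ((a + 1) / a)
          - 1 / 2 * (X⁻¹ * (x ^ 2)⁻¹ / ((3 * a + 1) / a))) := by field_simp
      _ ≤ _ := lo'
      _ = _ := by ring
  · calc _ = (a + 1) * (1 / a) * X * I := by ring
      _ ≤ _ := hi'
      _ = _ := by field_simp

lemma erwG_tendsto (a : ℝ) (ha : 0 < a) :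
    Tendsto (fun x => (erwG a x - 1) * x ^ 2) atTop (nhds (-((a + 1) / (2 * (3 * a + 1))))) := by
  have h2 : Tendsto (fun x : ℝ => (x ^ 2)⁻¹) atTop (nhds 0) :=
    (tendsto_pow_atTop two_ne_zero).inv_tendsto_atTop
  refine tendsto_of_tendsto_of_tendsto_of_le_of_le'
    (g := fun _ => -((a + 1) / (2 * (3 * a + 1))))
    (h := fun x => -((a + 1) / (2 * (3 * a + 1))) + 3 * (a + 1) / (8 * (5 * a + 1)) * (x ^ 2)⁻¹)
    tendsto_const_nhds ?_ ?_ ?_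
  · simpa using (h2.const_mul (3 * (a + 1) / (8 * (5 * a + 1)))).const_add
      (-((a + 1) / (2 * (3 * a + 1))))
  · filter_upwards [eventually_gt_atTop 0] with x hx
    have h := mul_le_mul_of_nonneg_right (erwG_bounds a x ha hx).1 (sq_nonneg x)
    have e : (x ^ 2)⁻¹ * x ^ 2 = 1 := by field_simp
    rw [sub_mul, mul_assoc, e] at h
    linarith
  · filter_upwards [eventually_gt_atTop 0] with x hx
    have h := mul_le_mul_of_nonneg_right (erwG_bounds a x ha hx).2 (sq_nonneg x)
    have e : (x ^ 2)⁻¹ * x ^ 2 = 1 := by field_simp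
    have e' : (x ^ 4)⁻¹ * x ^ 2 = (x ^ 2)⁻¹ := by field_simp
    rw [add_mul, sub_mul, mul_assoc, e, mul_assoc, e'] at h
    linarith

lemma erwG_tendsto_one (a : ℝ) (ha : 0 < a) : Tendsto (erwG a) atTop (nhds 1) := by
  have h2 : Tendsto (fun x : ℝ => (x ^ 2)⁻¹) atTop (nhds 0) :=
    (tendsto_pow_atTop two_ne_zero).inv_tendsto_atTop
  have h := ((erwG_tendsto a ha).mul h2).add_const 1
  simp only [mul_zero, zero_add] at h
  refine h.congr' ?_
  filter_upwards [eventually_gt_atTop 0] with x hx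
  field_simp
  ring

/-- The key identity `((a+1) F(x))^s x = G(x)^s` with `s = a/(a+1)`. -/
lemma erw_key (a x : ℝ) (ha : 0 < a) (hx : 0 < x) :
    ((a + 1) * FERW a x) ^ (a / (a + 1)) * x = erwG a x ^ (a / (a + 1)) := by
  have hF := erw_F_pos a x ha hx
  unfold erwG
  rw [Real.mul_rpow (x := (a + 1) * FERW a x) (by positivity) (by positivity),
    ← Real.rpow_mul hx.le,
    show (1 + 1 / a) * (a / (a + 1)) = 1 by field_simp, Real.rpow_one]

/-- Chain-rule form of `erwG_tendsto`: the factor `s` is the derivative of `z ↦ z^s` at `1`. The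
difference quotient is taken as `dslope`, which is continuous at `1`, so points with `G x = 1`
need no separate treatment. -/
lemma erw_pow_tendsto (a s : ℝ) (ha : 0 < a) :
    Tendsto (fun x => (erwG a x ^ s - 1) * x ^ 2) atTop
      (nhds (s * -((a + 1) / (2 * (3 * a + 1))))) := by
  have hd : HasDerivAt (fun z : ℝ => z ^ s) s 1 := by
    simpa using Real.hasDerivAt_rpow_const (x := 1) (p := s) (Or.inl one_ne_zero)
  have hc : ContinuousAt (dslope (fun z : ℝ => z ^ s) 1) 1 :=
    continuousAt_dslope_same.2 hd.differentiableAt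
  have h1 := hc.tendsto.comp (erwG_tendsto_one a ha)
  rw [dslope_same, hd.deriv] at h1
  refine (h1.mul (erwG_tendsto a ha)).congr fun x => ?_
  have := sub_smul_dslope (fun z : ℝ => z ^ s) 1 (erwG a x)
  simp only [smul_eq_mul, Real.one_rpow] at this
  simp only [Function.comp_apply]
  rw [← this]
  ring

/-- as `y → 0+`,
`F⁻¹(y) = ((a+1)y)^{−a/(a+1)} (1 − c₁ y^{2a/(a+1)} + o(y^{2a/(a+1)}))` with
`c₁ = a (a+1)^{2a/(a+1)} / (2(3a+1))`; in particular
`(a+1)^{a/(a+1)} y^{a/(a+1)} F⁻¹(y) → 1`. -/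
theorem erw_Finv_expansion (a : ℝ) (ha : a ∈ Set.Ioo (1/2 : ℝ) 1)
    (Finv : ℝ → ℝ)
    (hFinv : ∀ y : ℝ, 0 < y → 0 < Finv y ∧ FERW a (Finv y) = y)
    (hFinv' : ∀ x : ℝ, 0 < x → Finv (FERW a x) = x) :
    Tendsto (fun y : ℝ =>
        (Finv y / ((a + 1) * y) ^ (-(a/(a+1))) - 1) / y ^ (2*a/(a+1)))
      (nhdsWithin 0 (Set.Ioi 0))
      (nhds (-(a * (a + 1) ^ (2*a/(a+1)) / (2 * (3 * a + 1))))) ∧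
    Tendsto (fun y : ℝ => (a + 1) ^ (a/(a+1)) * y ^ (a/(a+1)) * Finv y)
      (nhdsWithin 0 (Set.Ioi 0)) (nhds 1) := by
  have ha0 : 0 < a := by linarith [ha.1]
  have hlim : Tendsto Finv (nhdsWithin 0 (Set.Ioi 0)) atTop := by
    rw [tendsto_atTop]
    intro M
    have hM : 0 < max M 1 := by positivity
    filter_upwards [Ioo_mem_nhdsGT (erw_F_pos a _ ha0 hM)] with y hy
    by_contra! hlt
    have h := erw_F_anti a (Finv y) (max M 1) ha0 (hFinv y hy.1).1 (hlt.le.trans (le_max_left _ _))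
    rw [(hFinv y hy.1).2] at h
    exact absurd hy.2 (not_lt.2 h)
  have hG1 := erwG_tendsto_one a ha0
  have hpow : ∀ s : ℝ, Tendsto (fun x => erwG a x ^ s) atTop (nhds 1) := fun s => by
    simpa using hG1.rpow_const (p := s) (Or.inl one_ne_zero)
  constructor
  · have h := ((erw_pow_tendsto a (a / (a + 1)) ha0).mul_const ((a + 1) ^ (2 * a / (a + 1)))).div
      (hpow (2 * a / (a + 1))) one_ne_zero
    have e : a / (a + 1) * -((a + 1) / (2 * (3 * a + 1))) * (a + 1) ^ (2 * a / (a + 1)) / 1 =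
        -(a * (a + 1) ^ (2*a/(a+1)) / (2 * (3 * a + 1))) := by
      field_simp
    rw [e] at h
    refine (h.comp hlim).congr' ?_
    filter_upwards [self_mem_nhdsWithin] with y hy
    have hy0 : 0 < y := hy
    obtain ⟨hx, hxy⟩ := hFinv y hy0
    have key := erw_key a (Finv y) ha0 hx
    rw [hxy] at key
    -- Squaring the key identity rewrites `y^{2s}` in terms of `G^{2s}` and `x²`.
    have key2 : (a + 1) ^ (2 * a / (a + 1)) * y ^ (2 * a / (a + 1)) * (Finv y) ^ 2 =
        erwG a (Finv y) ^ (2 * a / (a + 1)) := by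
      have hG : 0 ≤ erwG a (Finv y) := by
        unfold erwG; rw [hxy]; positivity
      rw [← Real.mul_rpow (by positivity) hy0.le,
        show 2 * a / (a + 1) = a / (a + 1) * (2 : ℕ) by push_cast; ring,
        Real.rpow_mul_natCast (by positivity), Real.rpow_mul_natCast hG, ← key]
      ring
    have hA : 0 < (a + 1) ^ (2 * a / (a + 1)) := by positivity
    have hY : 0 < y ^ (2 * a / (a + 1)) := by positivity
    simp only [Function.comp_apply, Pi.div_apply]
    rw [← key2, ← key, Real.rpow_neg (by positivity), div_inv_eq_mul]
    field_simp
  · refine ((hpow (a / (a + 1))).comp hlim).congr' ?_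
    filter_upwards [self_mem_nhdsWithin] with y hy
    have hy0 : 0 < y := hy
    obtain ⟨hx, hxy⟩ := hFinv y hy0
    have key := erw_key a (Finv y) ha0 hx
    rw [hxy] at key
    simp only [Function.comp_apply]
    rw [← key, Real.mul_rpow (by positivity) hy0.le]
end

section
/- The function a ↦ ρ_a is strictly decreasing on the interval (1/2, 1) and the function a ↦ log ρ_a is convex on (1/2, 1) (so a ↦ ρ_a is convex there); moreover ρ_a → +∞ as a → (1/2)+ and ρ_a → 1 as a → 1−, with the precise asymptotics lim_{a→(1/2)+} √(a − 1/2) · ρ_a = 1/2 and lim_{a→1−} (ρ_a − 1)/(1 − a) = log 2. -/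
/-!
Write `L s = log (Γ(1/2 + s/2) Γ(1 - s/2) / √π)`, so that `log ρ_a = a * L (1/a)`. Since `log Γ` is
convex, `L` is convex on `(0, 2)`, hence its perspective `a ↦ a * L (1/a)` is convex on all of
`(1/2, ∞)`. This gives log-convexity of `ρ`, and convexity by composing with `exp`.

The point `a = 1` is interior to that larger interval: `ρ_1 = 1`, and the known values of `Γ'` at
`1` and `1/2` give `ρ'(1) = -log 2`. This is the asymptotics at `1`; and since slopes of the convex
function `log ρ` to the left of `1` are at most its derivative `-log 2 < 0` at `1`, `ρ` is strictly
decreasing on `(1/2, 1)`.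

At `1/2`, put `t = a - 1/2`. The recurrence `Γ(u) = Γ(1 + u) / u` at `u = 1 - 1/(2a) = t / a` gives
`ρ_a = (D a / t) ^ a` with `D` continuous and `D (1/2) = 1/4`, so
`√t * ρ_a = t ^ (-t) * D a ^ a → (1/4) ^ (1/2) = 1/2`.
-/

open Filter

/-- The perspective of a convex function, restricted to a line. -/
lemma convexOn_perspective {L : ℝ → ℝ} (hL : ConvexOn ℝ (Set.Ioo (0 : ℝ) 2) L) :
    ConvexOn ℝ (Set.Ioi (1/2 : ℝ)) (fun a => a * L (1 / a)) := by
  refine ⟨convex_Ioi _, ?_⟩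
  intro x hx y hy l m hl hm hlm
  simp only [Set.mem_Ioi, smul_eq_mul] at *
  have key : ∀ z : ℝ, 1/2 < z → 1 / z ∈ Set.Ioo (0 : ℝ) 2 := by
    intro z hz
    have hz0 : 0 < z := by linarith
    refine ⟨by positivity, ?_⟩
    rw [div_lt_iff₀ hz0]
    linarith
  have hx0 : 0 < x := by linarith
  have hy0 : 0 < y := by linarith
  have ha : 0 < l * x + m * y := by
    have : 1/2 < l * x + m * y := by
      simpa using (convex_Ioi (1/2 : ℝ)) (Set.mem_Ioi.2 hx) (Set.mem_Ioi.2 hy) hl hm hlm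
    linarith
  -- `1/a` is the average of `1/x` and `1/y` with weights `l x / a` and `m y / a`.
  have h := hL.2 (key x hx) (key y hy)
    (show 0 ≤ l * x / (l * x + m * y) by positivity)
    (show 0 ≤ m * y / (l * x + m * y) by positivity)
    (by field_simp)
  simp only [smul_eq_mul] at h
  have e : l * x / (l * x + m * y) * (1 / x) + m * y / (l * x + m * y) * (1 / y)
      = 1 / (l * x + m * y) := by
    field_simp
    linarith
  rw [e] at h
  calc (l * x + m * y) * L (1 / (l * x + m * y))
      ≤ (l * x + m * y) * (l * x / (l * x + m * y) * L (1 / x)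
          + m * y / (l * x + m * y) * L (1 / y)) := by gcongr
    _ = l * (x * L (1 / x)) + m * (y * L (1 / y)) := by field_simp

lemma convexOn_log_base : ConvexOn ℝ (Set.Ioo (0 : ℝ) 2) (fun s =>
    Real.log ((1 / Real.sqrt Real.pi) * Real.Gamma (1/2 + s/2) * Real.Gamma (1 - s/2))) := by
  have h1 : ConvexOn ℝ (Set.Ioo (0 : ℝ) 2) (fun s => Real.log (Real.Gamma (1/2 + s/2))) := by
    refine ⟨convex_Ioo _ _, ?_⟩
    intro x hx y hy l m hl hm hlm
    have := Real.convexOn_log_Gamma.2 (x := 1/2 + x/2) (y := 1/2 + y/2)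
      (by simp only [Set.mem_Ioi]; linarith [hx.1]) (by simp only [Set.mem_Ioi]; linarith [hy.1])
      hl hm hlm
    simp only [smul_eq_mul, Function.comp] at this ⊢
    convert this using 3
    linear_combination (-1/2) * hlm
  have h2 : ConvexOn ℝ (Set.Ioo (0 : ℝ) 2) (fun s => Real.log (Real.Gamma (1 - s/2))) := by
    refine ⟨convex_Ioo _ _, ?_⟩
    intro x hx y hy l m hl hm hlm
    have := Real.convexOn_log_Gamma.2 (x := 1 - x/2) (y := 1 - y/2)
      (by simp only [Set.mem_Ioi]; linarith [hx.2]) (by simp only [Set.mem_Ioi]; linarith [hy.2])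
      hl hm hlm
    simp only [smul_eq_mul, Function.comp] at this ⊢
    convert this using 3
    linear_combination (-1) * hlm
  refine ((h1.add h2).add_const (Real.log (1 / Real.sqrt Real.pi))).congr ?_
  intro s hs
  have g1 : 0 < Real.Gamma (1/2 + s/2) := Real.Gamma_pos_of_pos (by linarith [hs.1])
  have g2 : 0 < Real.Gamma (1 - s/2) := Real.Gamma_pos_of_pos (by linarith [hs.2])
  have g3 : 0 < 1 / Real.sqrt Real.pi := by positivity
  simp only [Pi.add_apply]
  rw [Real.log_mul (by positivity) g2.ne', Real.log_mul g3.ne' g1.ne']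
  ring

lemma rho_base_pos {a : ℝ} (ha : 1/2 < a) :
    0 < (1 / Real.sqrt Real.pi) * Real.Gamma (1/2 + 1/(2*a)) * Real.Gamma (1 - 1/(2*a)) := by
  have ha0 : 0 < a := by linarith
  have h : 1 / (2*a) < 1 := by
    rw [div_lt_iff₀ (by positivity)]
    linarith
  have g1 : 0 < Real.Gamma (1/2 + 1/(2*a)) := Real.Gamma_pos_of_pos (by positivity)
  have g2 : 0 < Real.Gamma (1 - 1/(2*a)) := Real.Gamma_pos_of_pos (by linarith)
  positivity

lemma rhoERW_pos {a : ℝ} (ha : 1/2 < a) : 0 < rhoERW a :=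
  Real.rpow_pos_of_pos (rho_base_pos ha) a

/-- Log-convexity holds beyond `1`, which makes `1` an interior point. -/
lemma convexOn_log_rho :
    ConvexOn ℝ (Set.Ioi (1/2 : ℝ)) (fun a => Real.log (rhoERW a)) := by
  refine (convexOn_perspective convexOn_log_base).congr ?_
  intro a ha
  simp only [rhoERW]
  rw [Real.log_rpow (rho_base_pos ha), show 1 / a / 2 = 1 / (2 * a) by rw [div_div, mul_comm]]

lemma rho_base_one : (1 / Real.sqrt Real.pi) * Real.Gamma (1/2 + 1/(2*1))
    * Real.Gamma (1 - 1/(2*1)) = 1 := by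
  norm_num [Real.Gamma_one, -one_div]
  rw [Real.Gamma_one_half_eq]
  field_simp

lemma rhoERW_one : rhoERW 1 = 1 := by
  rw [rhoERW, rho_base_one, Real.one_rpow]

/-- Uses `Γ'(1) = -γ` and `Γ'(1/2) = -√π (γ + 2 log 2)`. -/
lemma hasDerivAt_rho_one : HasDerivAt rhoERW (-Real.log 2) 1 := by
  have hi : HasDerivAt (fun a : ℝ => 1 / (2*a)) (-1/2) 1 := by
    have := ((hasDerivAt_id (1:ℝ)).const_mul 2).inv (by norm_num)
    refine (this.congr_deriv (by norm_num)).congr_of_eventuallyEq (Eventually.of_forall fun a => ?_)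
    simp
  have e1 : (1/2 + 1/(2*1) : ℝ) = 1 := by norm_num
  have e2 : (1 - 1/(2*1) : ℝ) = 1/2 := by norm_num
  have d1 : HasDerivAt (fun a : ℝ => Real.Gamma (1/2 + 1/(2*a)))
      (-Real.eulerMascheroniConstant * (-1/2)) 1 :=
    HasDerivAt.comp (h₂ := Real.Gamma) (h := fun a : ℝ => 1/2 + 1/(2*a)) 1
      (by rw [e1]; exact Real.hasDerivAt_Gamma_one) (hi.const_add _)
  have d2 : HasDerivAt (fun a : ℝ => Real.Gamma (1 - 1/(2*a)))
      (-Real.sqrt Real.pi * (Real.eulerMascheroniConstant + 2 * Real.log 2) * (-(-1/2))) 1 :=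
    HasDerivAt.comp (h₂ := Real.Gamma) (h := fun a : ℝ => 1 - 1/(2*a)) 1
      (by rw [e2]; exact Real.hasDerivAt_Gamma_one_half) (hi.const_sub _)
  have d := ((d1.const_mul (1 / Real.sqrt Real.pi)).mul d2).rpow (hasDerivAt_id (1:ℝ))
    (rho_base_pos (a := 1) (by norm_num))
  refine d.congr_deriv ?_
  simp only [Pi.mul_apply, id]
  rw [rho_base_one, e1, e2, Real.Gamma_one, Real.Gamma_one_half_eq]
  have : Real.sqrt Real.pi ≠ 0 := by positivity
  simp
  field_simp
  ring

lemma strictAntiOn_rho : StrictAntiOn rhoERW (Set.Ioo (1/2 : ℝ) 1) := by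
  intro x hx y hy hxy
  have hd : HasDerivAt (fun a => Real.log (rhoERW a)) (-Real.log 2) 1 := by
    have := hasDerivAt_rho_one.log (by rw [rhoERW_one]; norm_num)
    rwa [rhoERW_one, div_one] at this
  have h1 := convexOn_log_rho.slope_mono_adjacent (x := x) (y := y) (z := 1) hx.1
    (by norm_num) hxy hy.2
  have h2 := convexOn_log_rho.slope_le_of_hasDerivAt (x := y) (y := 1) hy.1
    (by norm_num) hy.2 hd
  rw [slope_def_field] at h2
  have h3 : 0 < Real.log 2 := Real.log_pos (by norm_num)
  have h4 := h1.trans h2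
  rw [div_le_iff₀ (by linarith)] at h4
  have h5 : Real.log (rhoERW y) < Real.log (rhoERW x) := by nlinarith
  exact (Real.log_lt_log_iff (rhoERW_pos hy.1) (rhoERW_pos hx.1)).1 h5

/-- `D a` in `ρ_a = (D a / (a - 1/2)) ^ a`, the recurrence for `Γ` having extracted the pole. -/
noncomputable def rhoRegular (a : ℝ) : ℝ :=
  (1 / Real.sqrt Real.pi) * Real.Gamma (1/2 + 1/(2*a)) * Real.Gamma (1 - 1/(2*a) + 1) * a

lemma rhoRegular_half : rhoRegular (1/2) = 1/4 := by
  have e1 : (1/2 + 1/(2*(1/2)) : ℝ) = 1/2 + 1 := by norm_num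
  have e2 : (1 - 1/(2*(1/2)) + 1 : ℝ) = 1 := by norm_num
  rw [rhoRegular, e1, e2, Real.Gamma_one, Real.Gamma_add_one (by norm_num),
    Real.Gamma_one_half_eq]
  field_simp
  norm_num

lemma continuousAt_rhoRegular : ContinuousAt rhoRegular (1/2) := by
  have hi : ContinuousAt (fun a : ℝ => 1 / (2*a)) (1/2) := by
    refine ContinuousAt.div (by fun_prop) (by fun_prop) (by norm_num)
  have hG : ∀ z : ℝ, 0 < z → ContinuousAt Real.Gamma z := fun z hz =>
    (Real.differentiableAt_Gamma fun m hm => by have : (0 : ℝ) ≤ m := m.cast_nonneg; linarith).continuousAt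
  have c1 : ContinuousAt (fun a : ℝ => Real.Gamma (1/2 + 1/(2*a))) (1/2) :=
    ContinuousAt.comp (g := Real.Gamma) (hG _ (by norm_num)) (continuousAt_const.add hi)
  have c2 : ContinuousAt (fun a : ℝ => Real.Gamma (1 - 1/(2*a) + 1)) (1/2) :=
    ContinuousAt.comp (g := Real.Gamma) (hG _ (by norm_num))
      ((continuousAt_const.sub hi).add continuousAt_const)
  exact ((continuousAt_const.mul c1).mul c2).mul continuousAt_id

lemma sqrt_mul_rho {a : ℝ} (ha : 1/2 < a) :
    Real.sqrt (a - 1/2) * rhoERW a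
      = Real.exp (-((a - 1/2) * Real.log (a - 1/2))) * rhoRegular a ^ a := by
  have ht : 0 < a - 1/2 := by linarith
  have ha0 : 0 < a := by linarith
  have hu : 1 - 1/(2*a) = (a - 1/2) / a := by field_simp
  have hb : (1 / Real.sqrt Real.pi) * Real.Gamma (1/2 + 1/(2*a)) * Real.Gamma (1 - 1/(2*a))
      = rhoRegular a / (a - 1/2) := by
    have hu0 : 1 - 1/(2*a) ≠ 0 := by rw [hu]; positivity
    rw [rhoRegular, Real.Gamma_add_one hu0, eq_div_iff ht.ne']
    nth_rewrite 2 [hu]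
    field_simp
  have hD : 0 < rhoRegular a := by
    have := rho_base_pos ha
    rw [hb] at this
    exact (div_pos_iff_of_pos_right ht).1 this
  rw [rhoERW, hb, Real.div_rpow hD.le ht.le, Real.sqrt_eq_rpow, mul_div_assoc', mul_comm,
    mul_div_assoc, ← Real.rpow_sub ht, Real.rpow_def_of_pos ht, mul_comm]
  congr 2
  ring

lemma tendsto_sqrt_mul_rho : Tendsto (fun a : ℝ => Real.sqrt (a - 1/2) * rhoERW a)
    (nhdsWithin (1/2 : ℝ) (Set.Ioi (1/2 : ℝ))) (nhds (1/2)) := by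
  have c1 : ContinuousAt (fun a : ℝ => Real.exp (-((a - 1/2) * Real.log (a - 1/2)))) (1/2) := by
    have : Continuous (fun a : ℝ => (a - 1/2) * Real.log (a - 1/2)) :=
      Real.continuous_mul_log.comp (continuous_id.sub continuous_const)
    exact (Real.continuous_exp.comp this.neg).continuousAt
  have c2 : ContinuousAt (fun a : ℝ => rhoRegular a ^ a) (1/2) :=
    continuousAt_rhoRegular.rpow continuousAt_id (Or.inr (by norm_num))
  have h := (c1.mul c2).tendsto
  have e : Real.exp (-(((1/2 : ℝ) - 1/2) * Real.log (1/2 - 1/2))) * rhoRegular (1/2) ^ (1/2 : ℝ)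
      = 1/2 := by
    rw [rhoRegular_half, ← Real.sqrt_eq_rpow, show (1/4 : ℝ) = (1/2)^2 by norm_num,
      Real.sqrt_sq (by norm_num)]
    simp
  simp only [Pi.mul_apply, e] at h
  refine (h.mono_left nhdsWithin_le_nhds).congr' ?_
  filter_upwards [self_mem_nhdsWithin] with a ha
  exact (sqrt_mul_rho ha).symm

/-- `a ↦ ρ_a` is strictly decreasing on `(1/2,1)`, log-convex (hence
convex) there, tends to `+∞` at `1/2+` and to `1` at `1−`, with the precise
asymptotics `√(a−1/2) ρ_a → 1/2` and `(ρ_a−1)/(1−a) → log 2`. -/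
theorem erw_rho_properties :
    StrictAntiOn (fun a : ℝ => rhoERW a) (Set.Ioo (1/2 : ℝ) 1) ∧
    ConvexOn ℝ (Set.Ioo (1/2 : ℝ) 1) (fun a : ℝ => Real.log (rhoERW a)) ∧
    ConvexOn ℝ (Set.Ioo (1/2 : ℝ) 1) (fun a : ℝ => rhoERW a) ∧
    Tendsto rhoERW (nhdsWithin (1/2 : ℝ) (Set.Ioi (1/2 : ℝ))) atTop ∧
    Tendsto rhoERW (nhdsWithin (1 : ℝ) (Set.Iio (1 : ℝ))) (nhds 1) ∧
    Tendsto (fun a : ℝ => Real.sqrt (a - 1/2) * rhoERW a)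
      (nhdsWithin (1/2 : ℝ) (Set.Ioi (1/2 : ℝ))) (nhds (1/2)) ∧
    Tendsto (fun a : ℝ => (rhoERW a - 1) / (1 - a))
      (nhdsWithin (1 : ℝ) (Set.Iio (1 : ℝ))) (nhds (Real.log 2)) := by
  have hc : ConvexOn ℝ (Set.Ioo (1/2 : ℝ) 1) (fun a : ℝ => Real.log (rhoERW a)) :=
    convexOn_log_rho.subset (fun x hx => hx.1) (convex_Ioo _ _)
  refine ⟨strictAntiOn_rho, hc, ?_, ?_, ?_, tendsto_sqrt_mul_rho, ?_⟩
  · refine ⟨convex_Ioo _ _, ?_⟩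
    intro x hx y hy l m hl hm hlm
    have hz := convex_Ioo _ _ hx hy hl hm hlm
    have h1 := Real.exp_le_exp.2 (hc.2 hx hy hl hm hlm)
    have h2 := convexOn_exp.2 (Set.mem_univ (Real.log (rhoERW x)))
      (Set.mem_univ (Real.log (rhoERW y))) hl hm hlm
    simp only [Real.exp_log (rhoERW_pos hz.1)] at h1
    simp only [Real.exp_log (rhoERW_pos hx.1), Real.exp_log (rhoERW_pos hy.1)] at h2
    exact h1.trans h2
  · have hs : Tendsto (fun a : ℝ => (Real.sqrt (a - 1/2))⁻¹)
        (nhdsWithin (1/2 : ℝ) (Set.Ioi (1/2 : ℝ))) atTop := by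
      refine tendsto_inv_nhdsGT_zero.comp (tendsto_nhdsWithin_iff.2 ⟨?_, ?_⟩)
      · have : Continuous (fun a : ℝ => Real.sqrt (a - 1/2)) := by fun_prop
        simpa using (this.tendsto (1/2)).mono_left nhdsWithin_le_nhds
      · filter_upwards [self_mem_nhdsWithin] with a ha
        exact Real.sqrt_pos.2 (sub_pos.2 ha)
    refine (tendsto_sqrt_mul_rho.pos_mul_atTop (by norm_num) hs).congr' ?_
    filter_upwards [self_mem_nhdsWithin] with a ha
    have : 0 < Real.sqrt (a - 1/2) := Real.sqrt_pos.2 (sub_pos.2 ha)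
    rw [mul_comm, inv_mul_cancel_left₀ this.ne']
  · have := hasDerivAt_rho_one.continuousAt.tendsto
    rw [rhoERW_one] at this
    exact this.mono_left nhdsWithin_le_nhds
  · have h := (hasDerivAt_iff_tendsto_slope.1 hasDerivAt_rho_one).neg
    rw [neg_neg] at h
    refine (h.mono_left (nhdsWithin_mono _ fun x hx => ne_of_lt hx)).congr fun a => ?_
    rw [slope_def_field, rhoERW_one, ← div_neg, neg_sub]
end
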